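/- The function g(x, y) := −log x − log y is not smooth relative to the negative Shannon entropy on the probability simplex in ℝ²: for every L > 0 there exist points z₁ = (x₁, y₁) and z₂ = (x₂, y₂) in the relative interior of the simplex such that g(z₂) > g(z₁) + ⟨∇g(z₁), z₂ − z₁⟩ + L D_h(z₂, z₁), where h(x, y) := x log x + y log y and D_h(z₂, z₁) := h(z₂) − h(z₁) − ⟨∇h(z₁), z₂ − z₁⟩. -/

import Mathlib

/-!
As a function of `z₂`, the right-hand side `g z₁ + ⟪∇g z₁, z₂ - z₁⟫ + L * D_h(z₂, z₁)` of the
smoothness inequality is an affine function plus `L * h z₂`. Since `t * log t` extends continuously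
to `t = 0`, it is bounded on the compact simplex, whereas the logarithmic barrier `g z₂` blows up
as `z₂` approaches the boundary. So for every base point `z₁` and every `L` some `z₂` violates the
inequality.
-/

section RelativeSmoothness

variable {E : Type*} [NormedAddCommGroup E] [NormedSpace ℝ E]

/-- The Bregman divergence `D_h(z₂, z₁)`, the remainder at `z₂` of the first-order expansion of `h`
at the base point `z₁`. It is meaningful only where `h` is differentiable at `z₁`, as `fderiv` is
`0` otherwise. -/
noncomputable def bregmanDiv (h : E → ℝ) (z₂ z₁ : E) : ℝ :=
  h z₂ - h z₁ - fderiv ℝ h z₁ (z₂ - z₁)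

/-- The `L`-smoothness inequality of `g` relative to `h` on `s`, for a fixed base point `z₁`;
`g` is `L`-smooth relative to `h` on `s` when this holds at every `z₁ ∈ s`. -/
def RelSmoothAt (L : ℝ) (g h : E → ℝ) (s : Set E) (z₁ : E) : Prop :=
  ∀ z₂ ∈ s, g z₂ ≤ g z₁ + fderiv ℝ g z₁ (z₂ - z₁) + L * bregmanDiv h z₂ z₁

theorem RelSmoothAt.bddAbove_image {L : ℝ} {g h : E → ℝ} {s K : Set E} {z₁ : E}
    (hg : RelSmoothAt L g h s z₁) (hK : IsCompact K) (hsK : s ⊆ K) (hh : ContinuousOn h K) :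
    BddAbove (g '' s) := by
  have hcont : ContinuousOn
      (fun z₂ ↦ g z₁ + fderiv ℝ g z₁ (z₂ - z₁) + L * bregmanDiv h z₂ z₁) K := by
    unfold bregmanDiv
    fun_prop
  obtain ⟨M, hM⟩ := hK.bddAbove_image hcont
  refine ⟨M, Set.forall_mem_image.2 fun z₂ hz₂ ↦ ?_⟩
  exact (hg z₂ hz₂).trans (hM (Set.mem_image_of_mem _ (hsK hz₂)))

end RelativeSmoothness

section Simplex

variable {ι : Type*} [Fintype ι]

variable (ι) in
/-- The relative interior of the probability simplex `stdSimplex ℝ ι`. -/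
def openSimplex : Set (ι → ℝ) :=
  {x | (∀ i, 0 < x i) ∧ ∑ i, x i = 1}

/-- The logarithmic barrier of the positive orthant, the function `g` of the theorem. -/
noncomputable def logBarrier (x : ι → ℝ) : ℝ :=
  ∑ i, -Real.log (x i)

/-- The negative Shannon entropy. The convention `Real.log 0 = 0` makes it the continuous extension
to the boundary of the simplex. -/
noncomputable def negEntropy (x : ι → ℝ) : ℝ :=
  ∑ i, x i * Real.log (x i)

theorem openSimplex_subset_stdSimplex : openSimplex ι ⊆ stdSimplex ℝ ι :=
  fun _ hx ↦ ⟨fun i ↦ (hx.1 i).le, hx.2⟩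

theorem exists_mem_openSimplex_apply_eq [Nontrivial ι] (i : ι) {t : ℝ} (ht₀ : 0 < t)
    (ht₁ : t < 1) : ∃ x ∈ openSimplex ι, x i = t := by
  classical
  have hcard : 0 < (Fintype.card ι : ℝ) - 1 :=
    sub_pos.2 (by exact_mod_cast Fintype.one_lt_card (α := ι))
  refine ⟨Function.update (fun _ ↦ (1 - t) / (Fintype.card ι - 1)) i t, ⟨fun j ↦ ?_, ?_⟩,
    Function.update_self ..⟩
  · rcases eq_or_ne j i with rfl | hj
    · rwa [Function.update_self]
    · rw [Function.update_of_ne hj]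
      exact div_pos (sub_pos.2 ht₁) hcard
  · rw [Finset.sum_update_of_mem (Finset.mem_univ i), Finset.sum_const,
      Finset.card_univ_sdiff, Finset.card_singleton, nsmul_eq_mul,
      Nat.cast_pred Fintype.card_pos, mul_div_cancel₀ _ hcard.ne', add_sub_cancel]

theorem neg_log_apply_le_logBarrier {x : ι → ℝ} (hx : x ∈ stdSimplex ℝ ι) (i : ι) :
    -Real.log (x i) ≤ logBarrier x := by
  refine Finset.single_le_sum (f := fun j ↦ -Real.log (x j)) (fun j _ ↦ ?_) (Finset.mem_univ i)
  obtain ⟨h₀, h₁⟩ := mem_Icc_of_mem_stdSimplex hx j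
  exact neg_nonneg.2 (Real.log_nonpos h₀ h₁)

theorem not_bddAbove_logBarrier_image_openSimplex [Nontrivial ι] :
    ¬BddAbove (logBarrier '' openSimplex ι) := by
  refine not_bddAbove_iff.2 fun M ↦ ?_
  obtain ⟨i⟩ : Nonempty ι := inferInstance
  have hlt : Real.exp (-(|M| + 1)) < 1 := Real.exp_lt_one_iff.2 (by linarith [abs_nonneg M])
  obtain ⟨x, hx, hxi⟩ := exists_mem_openSimplex_apply_eq i (Real.exp_pos _) hlt
  refine ⟨_, Set.mem_image_of_mem _ hx, ?_⟩
  calc M < |M| + 1 := (le_abs_self M).trans_lt (lt_add_one _)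
    _ = -Real.log (x i) := by rw [hxi, Real.log_exp, neg_neg]
    _ ≤ logBarrier x := neg_log_apply_le_logBarrier (openSimplex_subset_stdSimplex hx) i

theorem continuous_negEntropy : Continuous (negEntropy : (ι → ℝ) → ℝ) :=
  continuous_finsetSum _ fun i _ ↦ Real.continuous_mul_log.comp (continuous_apply i)

theorem not_relSmoothAt_logBarrier_negEntropy [Nontrivial ι] (L : ℝ) (x : ι → ℝ) :
    ¬RelSmoothAt L logBarrier negEntropy (openSimplex ι) x := fun h ↦
  not_bddAbove_logBarrier_image_openSimplex <|
    h.bddAbove_image (isCompact_stdSimplex ℝ ι) openSimplex_subset_stdSimplex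
      continuous_negEntropy.continuousOn

theorem fderiv_sum_comp_apply {φ : ι → ℝ → ℝ} {φ' x : ι → ℝ}
    (hφ : ∀ i, HasDerivAt (φ i) (φ' i) (x i)) (v : ι → ℝ) :
    fderiv ℝ (fun y : ι → ℝ ↦ ∑ i, φ i (y i)) x v = ∑ i, φ' i * v i := by
  have hderiv : HasFDerivAt (fun y : ι → ℝ ↦ ∑ i, φ i (y i))
      (∑ i, φ' i • ContinuousLinearMap.proj (R := ℝ) (φ := fun _ : ι ↦ ℝ) i) x :=
    HasFDerivAt.fun_sum fun i _ ↦ (hφ i).comp_hasFDerivAt x (hasFDerivAt_apply i x)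
  simp [hderiv.fderiv]

theorem fderiv_logBarrier_apply {x : ι → ℝ} (hx : ∀ i, x i ≠ 0) (v : ι → ℝ) :
    fderiv ℝ logBarrier x v = ∑ i, -(1 / x i) * v i :=
  fderiv_sum_comp_apply (φ := fun _ t ↦ -Real.log t)
    (fun i ↦ by simpa only [one_div] using (Real.hasDerivAt_log (hx i)).fun_neg) v

theorem fderiv_negEntropy_apply {x : ι → ℝ} (hx : ∀ i, x i ≠ 0) (v : ι → ℝ) :
    fderiv ℝ negEntropy x v = ∑ i, (Real.log (x i) + 1) * v i :=
  fderiv_sum_comp_apply (φ := fun _ t ↦ t * Real.log t)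
    (fun i ↦ Real.hasDerivAt_mul_log (hx i)) v

end Simplex

theorem stmt13_general {ι : Type*} [Fintype ι] [Nontrivial ι] (L : ℝ) {x : ι → ℝ}
    (hx : ∀ i, 0 < x i) :
    ∃ y : ι → ℝ, (∀ i, 0 < y i) ∧ ∑ i, y i = 1 ∧
      ∑ i, -Real.log (x i) + ∑ i, -(1 / x i) * (y i - x i)
        + L * (∑ i, y i * Real.log (y i) - ∑ i, x i * Real.log (x i)
            - ∑ i, (Real.log (x i) + 1) * (y i - x i))
      < ∑ i, -Real.log (y i) := by
  have hx₀ (i : ι) : x i ≠ 0 := (hx i).ne'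
  have hns := not_relSmoothAt_logBarrier_negEntropy L x
  simp only [RelSmoothAt, bregmanDiv, fderiv_logBarrier_apply hx₀, fderiv_negEntropy_apply hx₀,
    Pi.sub_apply, not_forall, not_le] at hns
  obtain ⟨y, ⟨hy₀, hy₁⟩, hlt⟩ := hns
  exact ⟨y, hy₀, hy₁, hlt⟩

/-- `g(x, y) = −log x − log y` is not smooth relative to the negative
Shannon entropy on the probability simplex in `ℝ²`:
for every `L > 0` there exist `z₁ = (x₁, y₁)` and `z₂ = (x₂, y₂)` in the relative
interior of the simplex such that
`g(z₂) > g(z₁) + ⟨∇g(z₁), z₂ − z₁⟩ + L D_h(z₂, z₁)`,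
where `h(x, y) = x log x + y log y` and `D_h` is its Bregman divergence
(`∇h(x, y) = (log x + 1, log y + 1)`, `∇g(x, y) = (−1/x, −1/y)`). -/
theorem stmt13 :
    ∀ L : ℝ, 0 < L → ∃ x₁ y₁ x₂ y₂ : ℝ,
      0 < x₁ ∧ 0 < y₁ ∧ x₁ + y₁ = 1 ∧
      0 < x₂ ∧ 0 < y₂ ∧ x₂ + y₂ = 1 ∧
      (-Real.log x₁ - Real.log y₁)
        + ((-(1 / x₁)) * (x₂ - x₁) + (-(1 / y₁)) * (y₂ - y₁))
        + L * ((x₂ * Real.log x₂ + y₂ * Real.log y₂)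
            - (x₁ * Real.log x₁ + y₁ * Real.log y₁)
            - ((Real.log x₁ + 1) * (x₂ - x₁) + (Real.log y₁ + 1) * (y₂ - y₁)))
      < (-Real.log x₂ - Real.log y₂) := by
  intro L _
  obtain ⟨y, hy₀, hy₁, hlt⟩ := stmt13_general L (x := fun _ : Fin 2 ↦ 1 / 2) (by norm_num)
  simp only [Fin.sum_univ_two, ← sub_eq_add_neg] at hy₁ hlt
  exact ⟨1 / 2, 1 / 2, y 0, y 1, by norm_num, by norm_num, by norm_num, hy₀ 0, hy₀ 1, hy₁, hlt⟩
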